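/- If M₁ → M₂ is a one-step σπα-reduction of terms, then FV(M₂) ⊑ FV(M₁), where 𝒜 ⊑ ℬ means 𝒜_i ⊆ ⋃_{j ≥ i} ℬ_j for all i ≥ 1; and if s₁ → s₂ is a one-step σπα-reduction of substitutions, then O_{s₂}(𝒜) ⊑ O_{s₁}(𝒜) for every infinite sequence 𝒜 of finite sets of variables. -/

import Mathlib

/- Named terms and substitutions of the λπ-calculus. Variables are natural numbers. -/
mutual
inductive Tm : Type
  | var : ℕ → Tm
  | app : Tm → Tm → Tm
  | lam : ℕ → Tm → Tm
  | clos : Subst → Tm → Tm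
inductive Subst : Type
  | id : Subst
  | pi : ℕ → Subst
  | cons : Subst → Tm → ℕ → Subst
  | comp : Subst → Subst → Subst
end

/- Contexts are lists of variables; the head of the list is the *rightmost* variable,
so the context `Γ, a` of the paper is `a :: Γ`. -/
mutual
/-- `WfTm Γ M` is the judgement `Γ ⊢ M`. -/
inductive WfTm : List ℕ → Tm → Prop
  | var (Γ : List ℕ) (a : ℕ) : WfTm (a :: Γ) (.var a)
  | weak {Γ : List ℕ} {a : ℕ} (b : ℕ) : a ≠ b → WfTm Γ (.var a) → WfTm (b :: Γ) (.var a)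
  | app {Γ M N} : WfTm Γ M → WfTm Γ N → WfTm Γ (.app M N)
  | lam {Γ a M} : WfTm (a :: Γ) M → WfTm Γ (.lam a M)
  | clos {Γ s Δ M} : WfSub Γ s Δ → WfTm Δ M → WfTm Γ (.clos s M)
/-- `WfSub Γ s Δ` is the judgement `Γ ⊢ s ▷ Δ`. -/
inductive WfSub : List ℕ → Subst → List ℕ → Prop
  | id (Γ) : WfSub Γ .id Γ
  | pi (Γ a) : WfSub (a :: Γ) (.pi a) Γ
  | cons {Γ s Δ N} (a) : WfSub Γ s Δ → WfTm Γ N → WfSub Γ (.cons s N a) (a :: Δ)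
  | comp {Γ s Δ q Θ} : WfSub Γ s Δ → WfSub Δ q Θ → WfSub Γ (.comp s q) Θ
end

/-- The operator `O_{λa}` on sequences of finite sets (sequences are 0-indexed:
index `n` corresponds to the paper's index `n+1`). -/
def Olam (a : ℕ) (A : ℕ → Finset ℕ) : ℕ → Finset ℕ
  | 0 => (A 0).erase a ∪ A 1
  | n + 1 => A (n + 2)

/-- The operator `O_π`. -/
def Opi (A : ℕ → Finset ℕ) : ℕ → Finset ℕ
  | 0 => ∅
  | n + 1 => A n

mutual
/-- The free-variable sequence of a term: `FV M n` is the paper's `FV_{n+1}(M)`. -/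
def FV : Tm → ℕ → Finset ℕ
  | .var a => fun n => if n = 0 then {a} else ∅
  | .app M N => fun n => FV M n ∪ FV N n
  | .lam a M => Olam a (FV M)
  | .clos s M => Osub s (FV M)
/-- The operator `O_s` associated with a substitution `s`. -/
def Osub : Subst → (ℕ → Finset ℕ) → (ℕ → Finset ℕ)
  | .id => fun A => A
  | .pi _ => fun A => Opi A
  | .cons s N a => fun A n => Osub s (Olam a A) n ∪ FV N n
  | .comp s q => fun A => Osub s (Osub q A)
end

/-- Iterated abstraction `λΓ.M` (recall the head of the list is the rightmost variable). -/
def lamCtx : List ℕ → Tm → Tm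
  | [], M => M
  | a :: Γ, M => lamCtx Γ (.lam a M)

/-- Free variables of a judgement: `FV(Γ ⊢ M) = FV(λΓ.M)`. -/
def FVJ (Γ : List ℕ) (M : Tm) : ℕ → Finset ℕ := FV (lamCtx Γ M)

/-- Iterated lifting `⇑_Δ(s)`. -/
def Uparrow : List ℕ → Subst → Subst
  | [], s => s
  | a :: Δ, s => .cons (.comp (.pi a) (Uparrow Δ s)) (.var a) a

/- One-step reduction of the λπ-calculus (compatible closure).  The Boolean
parameter tells whether the rule `Beta` is allowed: `StepTm true` is λπ-reduction,
`StepTm false` is σπα-reduction. -/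
mutual
inductive StepTm : Bool → Tm → Tm → Prop
  | beta {a : ℕ} {M N : Tm} :
      StepTm true (.app (.lam a M) N) (.clos (.cons .id N a) M)
  | abs {β : Bool} {s : Subst} {a : ℕ} {M : Tm} :
      StepTm β (.clos s (.lam a M))
        (.lam a (.clos (.cons (.comp (.pi a) s) (.var a) a) M))
  | app {β : Bool} {s : Subst} {M N : Tm} :
      StepTm β (.clos s (.app M N)) (.app (.clos s M) (.clos s N))
  | consVar {β : Bool} {s : Subst} {N : Tm} {a : ℕ} :
      StepTm β (.clos (.cons s N a) (.var a)) N
  | new {β : Bool} {s : Subst} {N : Tm} {a b : ℕ} : a ≠ b →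
      StepTm β (.clos (.cons s N a) (.var b)) (.clos s (.var b))
  | idVar {β : Bool} {a : ℕ} : StepTm β (.clos .id (.var a)) (.var a)
  | clos {β : Bool} {s q : Subst} {M : Tm} :
      StepTm β (.clos s (.clos q M)) (.clos (.comp s q) M)
  | pi1 {β : Bool} {a b : ℕ} : a ≠ b → StepTm β (.clos (.pi a) (.var b)) (.var b)
  | pi2 {β : Bool} {s : Subst} {a b : ℕ} : a ≠ b →
      StepTm β (.clos (.comp s (.pi a)) (.var b)) (.clos s (.var b))
  | alpha1 {β : Bool} {a b : ℕ} {M : Tm} :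
      (∃ i, a ∈ FV (.lam a M) i) → (∀ i, b ∉ FV (.lam a M) i) →
      StepTm β (.lam a M) (.lam b (.clos (.cons (.pi b) (.var b) a) M))
  | lamCong {β : Bool} {a : ℕ} {M₁ M₂ : Tm} :
      StepTm β M₁ M₂ → StepTm β (.lam a M₁) (.lam a M₂)
  | appL {β : Bool} {M₁ M₂ N : Tm} : StepTm β M₁ M₂ → StepTm β (.app M₁ N) (.app M₂ N)
  | appR {β : Bool} {M N₁ N₂ : Tm} : StepTm β N₁ N₂ → StepTm β (.app M N₁) (.app M N₂)
  | closL {β : Bool} {s₁ s₂ : Subst} {M : Tm} :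
      StepSub β s₁ s₂ → StepTm β (.clos s₁ M) (.clos s₂ M)
  | closR {β : Bool} {s : Subst} {M₁ M₂ : Tm} :
      StepTm β M₁ M₂ → StepTm β (.clos s M₁) (.clos s M₂)
inductive StepSub : Bool → Subst → Subst → Prop
  | ass {β : Bool} {s q r : Subst} :
      StepSub β (.comp s (.comp q r)) (.comp (.comp s q) r)
  | idR {β : Bool} {s : Subst} : StepSub β (.comp s .id) s
  | idShift {β : Bool} {a : ℕ} : StepSub β (.comp .id (.pi a)) (.pi a)
  | consShift {β : Bool} {s : Subst} {N : Tm} {a : ℕ} :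
      StepSub β (.comp (.cons s N a) (.pi a)) s
  | map {β : Bool} {s q : Subst} {N : Tm} {a : ℕ} :
      StepSub β (.comp s (.cons q N a)) (.cons (.comp s q) (.clos s N) a)
  | consL {β : Bool} {s₁ s₂ : Subst} {N : Tm} {a : ℕ} :
      StepSub β s₁ s₂ → StepSub β (.cons s₁ N a) (.cons s₂ N a)
  | consR {β : Bool} {s : Subst} {N₁ N₂ : Tm} {a : ℕ} :
      StepTm β N₁ N₂ → StepSub β (.cons s N₁ a) (.cons s N₂ a)
  | compL {β : Bool} {s₁ s₂ q : Subst} :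
      StepSub β s₁ s₂ → StepSub β (.comp s₁ q) (.comp s₂ q)
  | compR {β : Bool} {s q₁ q₂ : Subst} :
      StepSub β q₁ q₂ → StepSub β (.comp s q₁) (.comp s q₂)
end

/-- One-step reduction `⇝` on judgements `Γ ⊢ M`, including the rule `α₂`.
`StepJ true` is λπ, `StepJ false` is σπα. -/
inductive StepJ (β : Bool) : List ℕ × Tm → List ℕ × Tm → Prop
  | step {Γ : List ℕ} {M₁ M₂ : Tm} : StepTm β M₁ M₂ → StepJ β (Γ, M₁) (Γ, M₂)
  | alpha2 {Γ Δ : List ℕ} {a b : ℕ} {M : Tm} :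
      (∃ i, a ∈ FVJ (Δ ++ [a]) M i) → (∀ i, b ∉ FVJ (Δ ++ [a]) M i) →
      StepJ β (Δ ++ a :: Γ, M)
        (Δ ++ b :: Γ, .clos (Uparrow Δ (.cons (.pi b) (.var b) a)) M)

/- Name-free (de Bruijn) terms and substitutions. -/
mutual
inductive NTm : Type
  | one : NTm
  | app : NTm → NTm → NTm
  | lam : NTm → NTm
  | clos : NSub → NTm → NTm
inductive NSub : Type
  | id : NSub
  | pi : NSub
  | cons : NSub → NTm → NSub
  | comp : NSub → NSub → NSub
end

/-- `piIter n` is the left-nested composition of `n+1` copies of `π`. -/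
def piIter : ℕ → NSub
  | 0 => .pi
  | k + 1 => .comp (piIter k) .pi

/-- `dbr n` is the de Bruijn index `n+1̲`: `dbr 0 = 1` and
`dbr (n+1) = ((…(π∘π)∘…)∘π)∘1` with `n+1` occurrences of `π`. -/
def dbr : ℕ → NTm
  | 0 => .one
  | n + 1 => .clos (piIter n) .one

/- One-step reduction of λσ (`NStepTm true`) resp. σ (`NStepTm false`)
on name-free terms/substitutions. -/
mutual
inductive NStepTm : Bool → NTm → NTm → Prop
  | beta {U V : NTm} : NStepTm true (.app (.lam U) V) (.clos (.cons .id V) U)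
  | abs {β : Bool} {u : NSub} {U : NTm} :
      NStepTm β (.clos u (.lam U)) (.lam (.clos (.cons (.comp .pi u) .one) U))
  | app {β : Bool} {u : NSub} {U V : NTm} :
      NStepTm β (.clos u (.app U V)) (.app (.clos u U) (.clos u V))
  | consVar {β : Bool} {u : NSub} {V : NTm} : NStepTm β (.clos (.cons u V) .one) V
  | idVar {β : Bool} : NStepTm β (.clos .id .one) .one
  | clos {β : Bool} {u v : NSub} {U : NTm} :
      NStepTm β (.clos u (.clos v U)) (.clos (.comp u v) U)
  | lamCong {β : Bool} {U₁ U₂ : NTm} : NStepTm β U₁ U₂ → NStepTm β (.lam U₁) (.lam U₂)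
  | appL {β : Bool} {U₁ U₂ V : NTm} : NStepTm β U₁ U₂ → NStepTm β (.app U₁ V) (.app U₂ V)
  | appR {β : Bool} {U V₁ V₂ : NTm} : NStepTm β V₁ V₂ → NStepTm β (.app U V₁) (.app U V₂)
  | closL {β : Bool} {u₁ u₂ : NSub} {U : NTm} :
      NStepSub β u₁ u₂ → NStepTm β (.clos u₁ U) (.clos u₂ U)
  | closR {β : Bool} {u : NSub} {U₁ U₂ : NTm} :
      NStepTm β U₁ U₂ → NStepTm β (.clos u U₁) (.clos u U₂)
inductive NStepSub : Bool → NSub → NSub → Prop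
  | ass {β : Bool} {u v w : NSub} : NStepSub β (.comp u (.comp v w)) (.comp (.comp u v) w)
  | idR {β : Bool} {u : NSub} : NStepSub β (.comp u .id) u
  | idShift {β : Bool} : NStepSub β (.comp .id .pi) .pi
  | consShift {β : Bool} {u : NSub} {V : NTm} : NStepSub β (.comp (.cons u V) .pi) u
  | map {β : Bool} {u v : NSub} {V : NTm} :
      NStepSub β (.comp u (.cons v V)) (.cons (.comp u v) (.clos u V))
  | consL {β : Bool} {u₁ u₂ : NSub} {V : NTm} :
      NStepSub β u₁ u₂ → NStepSub β (.cons u₁ V) (.cons u₂ V)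
  | consR {β : Bool} {u : NSub} {V₁ V₂ : NTm} :
      NStepTm β V₁ V₂ → NStepSub β (.cons u V₁) (.cons u V₂)
  | compL {β : Bool} {u₁ u₂ v : NSub} :
      NStepSub β u₁ u₂ → NStepSub β (.comp u₁ v) (.comp u₂ v)
  | compR {β : Bool} {u v₁ v₂ : NSub} :
      NStepSub β v₁ v₂ → NStepSub β (.comp u v₁) (.comp u v₂)
end

/- The correspondence `(Γ ⊢ M) ⟹ U` resp. `(Γ ⊢ s ▷ Δ) ⟹ u` between judgements and
name-free terms/substitutions (Definition 7.6 of the paper). -/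
mutual
inductive TrTm : List ℕ → Tm → NTm → Prop
  | var (Γ : List ℕ) (a : ℕ) : TrTm (a :: Γ) (.var a) (dbr 0)
  | weak {Γ : List ℕ} {a : ℕ} {n : ℕ} (b : ℕ) : a ≠ b →
      TrTm Γ (.var a) (dbr n) → TrTm (b :: Γ) (.var a) (dbr (n + 1))
  | app {Γ M N U V} : TrTm Γ M U → TrTm Γ N V → TrTm Γ (.app M N) (.app U V)
  | lam {Γ a M U} : TrTm (a :: Γ) M U → TrTm Γ (.lam a M) (.lam U)
  | clos {Γ s Δ M u U} : TrSub Γ s Δ u → TrTm Δ M U → TrTm Γ (.clos s M) (.clos u U)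
inductive TrSub : List ℕ → Subst → List ℕ → NSub → Prop
  | id (Γ) : TrSub Γ .id Γ .id
  | pi (Γ a) : TrSub (a :: Γ) (.pi a) Γ .pi
  | cons {Γ s Δ N u V} (a) : TrSub Γ s Δ u → TrTm Γ N V →
      TrSub Γ (.cons s N a) (a :: Δ) (.cons u V)
  | comp {Γ s Δ q Θ u v} : TrSub Γ s Δ u → TrSub Δ q Θ v →
      TrSub Γ (.comp s q) Θ (.comp u v)
end


/-!
The operators `O_s` preserve unions and are monotone for `⊑`, which settles the congruence rules
once the rewrite rules are known. Since `O_{λa}` undoes both `O_π` and the lifting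
`𝒜 ↦ O_π 𝒜 ∪ FV(a)`, both sides of a rewrite rule have the same free-variable sequence, except
for two kinds of rules: those discarding part of `⟨s, N\a⟩` only shrink the sequence, and those
discarding a shift (`π₁` and `π₂`) use `𝒜 ⊑ O_π 𝒜`.
-/

/-- The relation `𝒜 ⊑ ℬ`: every element of `𝒜 i` occurs in some `ℬ j` with `i ≤ j`. It compares
free-variable sequences while allowing a variable to move to a smaller index. -/
def TailSubset {ι α : Type*} [Preorder ι] (A B : ι → Finset α) : Prop :=
  ∀ i x, x ∈ A i → ∃ j, i ≤ j ∧ x ∈ B j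

local infix:50 " ⊑ " => TailSubset

namespace TailSubset

variable {ι α : Type*} [Preorder ι] {A B C D : ι → Finset α}

theorem of_le (h : A ≤ B) : A ⊑ B :=
  fun i _ hx => ⟨i, le_rfl, h i hx⟩

theorem of_eq (h : A = B) : A ⊑ B :=
  of_le h.le

theorem refl (A : ι → Finset α) : A ⊑ A :=
  of_le le_rfl

theorem sup [DecidableEq α] (hAB : A ⊑ B) (hCD : C ⊑ D) : A ⊔ C ⊑ B ⊔ D := by
  intro i x hx
  rcases Finset.mem_union.1 hx with hx | hx
  · obtain ⟨j, hij, hxj⟩ := hAB i x hx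
    exact ⟨j, hij, Finset.mem_union_left _ hxj⟩
  · obtain ⟨j, hij, hxj⟩ := hCD i x hx
    exact ⟨j, hij, Finset.mem_union_right _ hxj⟩

end TailSubset

section Operators

variable {A B : ℕ → Finset ℕ}

theorem mem_olam {a n x : ℕ} :
    x ∈ Olam a A n ↔ x ∈ A (n + 1) ∨ n = 0 ∧ x ≠ a ∧ x ∈ A 0 := by
  cases n with
  | zero => simp [Olam, or_comm]
  | succ n => simp [Olam]

theorem olam_sup (a : ℕ) (A B : ℕ → Finset ℕ) : Olam a (A ⊔ B) = Olam a A ⊔ Olam a B := by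
  ext n x
  simp only [mem_olam, Pi.sup_apply, Finset.sup_eq_union, Finset.mem_union]
  tauto

theorem opi_sup (A B : ℕ → Finset ℕ) : Opi (A ⊔ B) = Opi A ⊔ Opi B := by
  funext n
  cases n <;> simp [Opi]

theorem olam_opi (a : ℕ) (A : ℕ → Finset ℕ) : Olam a (Opi A) = A := by
  funext n
  cases n <;> simp [Olam, Opi]

theorem tailSubset_opi (A : ℕ → Finset ℕ) : A ⊑ Opi A :=
  fun i _ hx => ⟨i + 1, i.le_succ, hx⟩

theorem TailSubset.opi (h : A ⊑ B) : Opi A ⊑ Opi B := by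
  intro i x hx
  cases i with
  | zero => exact absurd hx (Finset.notMem_empty x)
  | succ i =>
    obtain ⟨j, hij, hxj⟩ := h i x hx
    exact ⟨j + 1, Nat.succ_le_succ hij, hxj⟩

theorem TailSubset.olam (a : ℕ) (h : A ⊑ B) : Olam a A ⊑ Olam a B := by
  intro i x hx
  rcases mem_olam.1 hx with hx | ⟨rfl, hxa, hx⟩
  · obtain ⟨_ | j, hij, hxj⟩ := h (i + 1) x hx
    · exact absurd hij i.not_succ_le_zero
    · exact ⟨j, Nat.le_of_succ_le_succ hij, mem_olam.2 (.inl hxj)⟩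
  · obtain ⟨_ | j, -, hxj⟩ := h 0 x hx
    · exact ⟨0, le_rfl, mem_olam.2 (.inr ⟨rfl, hxa, hxj⟩)⟩
    · exact ⟨j, j.zero_le, mem_olam.2 (.inl hxj)⟩

end Operators

section Equations

variable (s q : Subst) (M N : Tm) (a : ℕ) (A : ℕ → Finset ℕ)

theorem fv_app : FV (.app M N) = FV M ⊔ FV N := by
  rw [FV]
  rfl

theorem fv_lam : FV (.lam a M) = Olam a (FV M) := by
  rw [FV]

theorem fv_clos : FV (.clos s M) = Osub s (FV M) := by
  rw [FV]

theorem osub_id : Osub .id A = A := by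
  rw [Osub]

theorem osub_pi : Osub (.pi a) A = Opi A := by
  rw [Osub]

theorem osub_cons : Osub (.cons s N a) A = Osub s (Olam a A) ⊔ FV N := by
  rw [Osub]
  rfl

theorem osub_comp : Osub (.comp s q) A = Osub s (Osub q A) := by
  rw [Osub]

end Equations

theorem osub_sup : ∀ (s : Subst) (A B : ℕ → Finset ℕ), Osub s (A ⊔ B) = Osub s A ⊔ Osub s B
  | .id, A, B => by simp only [osub_id]
  | .pi _, A, B => by simp only [osub_pi, opi_sup]
  | .cons s N a, A, B => by
    simp only [osub_cons, olam_sup, osub_sup s]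
    exact sup_sup_distrib_right _ _ _
  | .comp s q, A, B => by simp only [osub_comp, osub_sup q, osub_sup s]

theorem TailSubset.osub :
    ∀ (s : Subst) {A B : ℕ → Finset ℕ}, A ⊑ B → Osub s A ⊑ Osub s B
  | .id, A, B, h => by simpa only [osub_id] using h
  | .pi _, A, B, h => by simpa only [osub_pi] using h.opi
  | .cons s N a, A, B, h => by
    simpa only [osub_cons] using (TailSubset.osub s (h.olam a)).sup (.refl (FV N))
  | .comp s q, A, B, h => by
    simpa only [osub_comp] using TailSubset.osub s (TailSubset.osub q h)

theorem olam_fv_var_self (a : ℕ) : Olam a (FV (.var a)) = ⊥ := by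
  funext n
  cases n <;> simp [Olam, FV]

theorem olam_fv_var_of_ne {a b : ℕ} (h : a ≠ b) : Olam a (FV (.var b)) = FV (.var b) := by
  funext n
  cases n <;> simp [Olam, FV, h]

theorem olam_opi_sup_fv_var (a : ℕ) (A : ℕ → Finset ℕ) :
    Olam a (Opi A ⊔ FV (.var a)) = A := by
  rw [olam_sup, olam_opi, olam_fv_var_self, sup_bot_eq]

mutual

theorem StepTm.fv_tailSubset :
    ∀ {β : Bool} {M₁ M₂ : Tm}, StepTm β M₁ M₂ → FV M₂ ⊑ FV M₁
  | _, _, _, .beta => .of_eq <| by simp only [fv_app, fv_lam, fv_clos, osub_cons, osub_id]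
  | _, _, _, .abs => .of_eq <| by
    simp only [fv_lam, fv_clos, osub_cons, osub_comp, osub_pi, olam_opi_sup_fv_var]
  | _, _, _, .app => .of_eq <| by simp only [fv_app, fv_clos, osub_sup]
  | _, _, _, .consVar => .of_le <| by simpa only [fv_clos, osub_cons] using le_sup_right
  | _, _, _, .new hab => .of_le <| by
    simpa only [fv_clos, osub_cons, olam_fv_var_of_ne hab] using le_sup_left
  | _, _, _, .idVar => .of_eq <| by simp only [fv_clos, osub_id]
  | _, _, _, .clos => .of_eq <| by simp only [fv_clos, osub_comp]
  | _, _, _, .pi1 _ => by simpa only [fv_clos, osub_pi] using tailSubset_opi _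
  | _, _, _, .pi2 _ => by
    simpa only [fv_clos, osub_comp, osub_pi] using (tailSubset_opi _).osub _
  | _, _, _, .alpha1 _ _ => .of_eq <| by
    simp only [fv_lam, fv_clos, osub_cons, osub_pi, olam_opi_sup_fv_var]
  | _, _, _, .lamCong h => by simpa only [fv_lam] using h.fv_tailSubset.olam _
  | _, _, _, .appL h => by simpa only [fv_app] using h.fv_tailSubset.sup (.refl _)
  | _, _, _, .appR h => by simpa only [fv_app] using (TailSubset.refl _).sup h.fv_tailSubset
  | _, _, _, .closL h => by simpa only [fv_clos] using h.osub_tailSubset _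
  | _, _, _, .closR h => by simpa only [fv_clos] using h.fv_tailSubset.osub _

theorem StepSub.osub_tailSubset :
    ∀ {β : Bool} {s₁ s₂ : Subst}, StepSub β s₁ s₂ →
      ∀ A : ℕ → Finset ℕ, Osub s₂ A ⊑ Osub s₁ A
  | _, _, _, .ass, _ => .of_eq <| by simp only [osub_comp]
  | _, _, _, .idR, _ => .of_eq <| by simp only [osub_comp, osub_id]
  | _, _, _, .idShift, _ => .of_eq <| by simp only [osub_comp, osub_id]
  | _, _, _, .consShift, _ => .of_le <| by
    simpa only [osub_comp, osub_cons, osub_pi, olam_opi] using le_sup_left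
  | _, _, _, .map, _ => .of_eq <| by simp only [fv_clos, osub_comp, osub_cons, osub_sup]
  | _, _, _, .consL h, _ => by
    simpa only [osub_cons] using (h.osub_tailSubset _).sup (.refl _)
  | _, _, _, .consR h, _ => by
    simpa only [osub_cons] using (TailSubset.refl _).sup h.fv_tailSubset
  | _, _, _, .compL h, _ => by simpa only [osub_comp] using h.osub_tailSubset _
  | _, _, _, .compR h, A => by simpa only [osub_comp] using (h.osub_tailSubset A).osub _

end

theorem step_FV_sqsubseteq_general (β : Bool) :
    (∀ M₁ M₂ : Tm, StepTm β M₁ M₂ → FV M₂ ⊑ FV M₁) ∧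
    (∀ s₁ s₂ : Subst, StepSub β s₁ s₂ → ∀ A : ℕ → Finset ℕ, Osub s₂ A ⊑ Osub s₁ A) :=
  ⟨fun _ _ h => h.fv_tailSubset, fun _ _ h => h.osub_tailSubset⟩

/-- one-step σπα-reduction decreases `FV` w.r.t. `⊑`, where
`𝒜 ⊑ ℬ` means `𝒜_i ⊆ ⋃_{j ≥ i} ℬ_j` for all `i`. -/
theorem step_FV_sqsubseteq :
    (∀ (M₁ M₂ : Tm), StepTm false M₁ M₂ →
      ∀ (i : ℕ) (x : ℕ), x ∈ FV M₂ i → ∃ j, i ≤ j ∧ x ∈ FV M₁ j) ∧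
    (∀ (s₁ s₂ : Subst), StepSub false s₁ s₂ →
      ∀ (A : ℕ → Finset ℕ) (i : ℕ) (x : ℕ), x ∈ Osub s₂ A i → ∃ j, i ≤ j ∧ x ∈ Osub s₁ A j) := by
  exact step_FV_sqsubseteq_general false
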